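/- arXiv:1505.01464 — 2 statements merged into one kernel-verified Lean document; each statement's English description precedes it below -/
import Mathlib

section
/- Let n be an odd integer with n ≥ 5, T = {an + b(3n−2) + c(3n−1) : a,b,c ∈ ℕ}, F(T) = n(3n−7)/2 + 2, and S = T ∪ {F(T)}. Then for every integer i ≥ (n+1)/2, no element of Ap(S, F(T)) has exactly i factorizations, i.e. M_i = ∅. -/
/-- The numerical semigroup `T = ⟨n, 3n-2, 3n-1⟩` as a subset of `ℕ`. -/
def Tset (n : ℕ) : Set ℕ :=
  {s | ∃ a b c : ℕ, s = a * n + b * (3 * n - 2) + c * (3 * n - 1)}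

/-- The Frobenius number of `T`, `F(T) = n(3n-7)/2 + 2` (exact division since `n` is odd). -/
def FT (n : ℕ) : ℕ := n * (3 * n - 7) / 2 + 2

/-- The numerical semigroup `S = T ∪ {F(T)} = ⟨n, 3n-2, 3n-1, F(T)⟩`. -/
def Sset (n : ℕ) : Set ℕ := Tset n ∪ {FT n}

/-- The Apéry set `Ap(S, F(T)) = {s ∈ S | s - F(T) ∉ S}`. -/
def Ap (n : ℕ) : Set ℕ := {s ∈ Sset n | ¬ ∃ t ∈ Sset n, t + FT n = s}

/-- `phi n (x,y,z) = xn + y(3n-2) + z(3n-1)`. -/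
def phi (n : ℕ) (p : ℕ × ℕ × ℕ) : ℕ :=
  p.1 * n + p.2.1 * (3 * n - 2) + p.2.2 * (3 * n - 1)

/-- The set of factorizations of `s` with respect to `(n, 3n-2, 3n-1)`. -/
def Zfac (n s : ℕ) : Set (ℕ × ℕ × ℕ) := {p | phi n p = s}

/-- `p` is the normal form of `s`: a factorization with `z < 2`, `y < (n+1)/2`,
`x < (3n-1)/2`. -/
def IsNF (n s : ℕ) (p : ℕ × ℕ × ℕ) : Prop :=
  p ∈ Zfac n s ∧ p.2.2 < 2 ∧ p.2.1 < (n + 1) / 2 ∧ p.1 < (3 * n - 1) / 2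

/-- `M_i`: elements of the Apéry set having exactly `i` factorizations. -/
def Mset (n i : ℕ) : Set ℕ := {s ∈ Ap n | (Zfac n s).ncard = i}

/-- `nf(M_i)`: normal forms of elements of `M_i`. -/
def nfM (n i : ℕ) : Set (ℕ × ℕ × ℕ) := {p | ∃ s ∈ Mset n i, IsNF n s p}

/-- An L-shape associated with `Ap(S, F(T))`: (C1) `phi` is a bijection from `L` onto the
Apéry set; (C2) `L` is downward closed for the componentwise order. -/
def IsLShape (n : ℕ) (L : Set (ℕ × ℕ × ℕ)) : Prop :=
  Set.BijOn (phi n) L (Ap n) ∧ ∀ u ∈ L, ∀ v : ℕ × ℕ × ℕ, v ≤ u → v ∈ L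

/-- The L-shape `F = F₁ ∪ F₂ ∪ F₃ ∪ F₄` (in `F₃`, `y ≤ (n-7)/2` is stated over the
integers as `2y + 7 ≤ n`, so that `F₃ = ∅` when `n = 5`). -/
def Fset (n : ℕ) : Set (ℕ × ℕ × ℕ) :=
  {p | p.2.2 = 0 ∧ p.1 ≤ (3 * n - 3) / 2 ∧ p.2.1 ≤ (n - 3) / 2} ∪
  {p | p.2.2 = 0 ∧ p.1 ≤ 1 ∧ p.2.1 = (n - 1) / 2} ∪
  {p | p.2.2 = 1 ∧ p.1 ≤ (3 * n - 3) / 2 ∧ 2 * p.2.1 + 7 ≤ n} ∪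
  {p | p.2.2 = 1 ∧ p.1 ≤ (3 * n - 5) / 2 ∧ p.2.1 = (n - 5) / 2}

/-!
A factorization `(x, y, z)` of `s` satisfies `s + (2y + z) = n(x + 3(y + z))`, so the weight
`2y + z` is determined modulo `n`, and a factorization is determined by its weight and `z`.
Every integer above `F(T)` lies in `T`, so elements of the Apéry set are at most
`2 F(T) = (n-1)(3n-4)`. Below `(n-1)(3n-2)` one has `y + z ≤ n - 2`, so at most two weights `r < n`
and `r + n` occur. The factorizations of weight `r` are separated by `⌊z/2⌋`, which is at most
`⌊r/2⌋`, and those of weight `r + n` by `y + z`, which is at least `(r + n)/2`. After shifting the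
latter down by `⌊(n-1)/2⌋`, the two ranges become disjoint parts of `{0, …, ⌊n/2⌋ - 1}`.
-/

lemma eq_or_eq_add_of_modEq_of_lt_two_mul {n a b : ℕ} (h : a ≡ b [MOD n]) (hab : a ≤ b)
    (hb : b < 2 * n) : b = a ∨ b = a + n := by
  obtain ⟨k, hk⟩ := (Nat.modEq_iff_dvd' hab).1 h
  have hk2 : k < 2 := by
    by_contra! hk2
    have := Nat.mul_le_mul_left n hk2
    omega
  interval_cases k <;> omega

lemma exists_lt_add_eq_mul {n : ℕ} (hn : 0 < n) (t : ℕ) : ∃ r < n, ∃ k, t + r = n * k := by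
  have hmod := Nat.mod_lt (t + (n - 1)) hn
  have hdiv := Nat.div_add_mod (t + (n - 1)) n
  exact ⟨n - 1 - (t + (n - 1)) % n, by omega, (t + (n - 1)) / n, by omega⟩

section Factorizations

variable {n : ℕ} {p q : ℕ × ℕ × ℕ}

/-- The weight `2y + z` of a factorization `(x, y, z)`: how far `phi n (x, y, z)` falls short of the
multiple `(x + 3(y + z))n` of `n`. -/
def weight (p : ℕ × ℕ × ℕ) : ℕ := 2 * p.2.1 + p.2.2

lemma phi_add_weight (hn : 0 < n) (p : ℕ × ℕ × ℕ) :
    phi n p + weight p = n * (p.1 + 3 * (p.2.1 + p.2.2)) := by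
  obtain ⟨k, rfl⟩ := Nat.exists_eq_add_of_lt hn
  have hy : 3 * (0 + k + 1) - 2 = 3 * k + 1 := by omega
  have hz : 3 * (0 + k + 1) - 1 = 3 * k + 2 := by omega
  rw [phi, weight, hy, hz]
  ring

lemma add_mul_le_phi (n : ℕ) (p : ℕ × ℕ × ℕ) : (p.2.1 + p.2.2) * (3 * n - 2) ≤ phi n p := by
  have hz : p.2.2 * (3 * n - 2) ≤ p.2.2 * (3 * n - 1) := by gcongr; norm_num
  rw [phi, add_mul]
  omega

lemma weight_modEq_of_phi_eq (hn : 0 < n) (h : phi n p = phi n q) :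
    weight p ≡ weight q [MOD n] := by
  refine Nat.ModEq.add_left_cancel' (phi n p) ?_
  nth_rw 2 [h]
  rw [phi_add_weight hn, phi_add_weight hn]
  exact (Nat.modEq_zero_iff_dvd.2 (dvd_mul_right ..)).trans
    (Nat.modEq_zero_iff_dvd.2 (dvd_mul_right ..)).symm

lemma eq_of_phi_eq_of_snd_eq (hn : 0 < n) (h : phi n p = phi n q) (hsnd : p.2 = q.2) : p = q := by
  refine Prod.ext (Nat.eq_of_mul_eq_mul_right hn ?_) hsnd
  simpa only [phi, hsnd, Nat.add_right_cancel_iff] using h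

end Factorizations

section Counting

/-- The label of a factorization `(x, y, z)`, which tells apart the factorizations of an integer
below `(n-1)(3n-2)`. The shift by `(n-1)/2` (rounded down) puts the labels of weight `r + n` just
above those of weight `r`. -/
def label (n : ℕ) (p : ℕ × ℕ × ℕ) : ℕ :=
  if weight p < n then p.2.2 / 2 else p.2.1 + p.2.2 - (n - 1) / 2

variable {n s : ℕ} {p q : ℕ × ℕ × ℕ}

lemma add_lt_of_mem_Zfac (hs : s < (n - 1) * (3 * n - 2)) (hp : p ∈ Zfac n s) :
    p.2.1 + p.2.2 < n - 1 :=
  lt_of_mul_lt_mul_right ((add_mul_le_phi n p).trans_lt (hp.trans_lt hs)) (Nat.zero_le _)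

lemma label_lt (hp : p.2.1 + p.2.2 < n - 1) : label n p < n / 2 := by
  unfold label weight
  split_ifs <;> omega

lemma snd_eq_of_label_eq_of_weight_eq (hl : label n p = label n q) (hw : weight p = weight q) :
    p.2 = q.2 := by
  unfold label at hl
  unfold weight at hl hw
  split_ifs at hl <;> ext <;> omega

lemma label_lt_label_of_weight_eq_add (hp : weight p < n) (hw : weight q = weight p + n) :
    label n p < label n q := by
  have hq : ¬ weight q < n := by omega
  rw [label, label, if_pos hp, if_neg hq]
  unfold weight at hp hw
  omega

lemma injOn_label_Zfac (hs : s < (n - 1) * (3 * n - 2)) : Set.InjOn (label n) (Zfac n s) := by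
  intro p hp q hq hl
  wlog hle : weight p ≤ weight q generalizing p q
  · exact (this hq hp hl.symm (le_of_not_ge hle)).symm
  have hqn := add_lt_of_mem_Zfac hs hq
  have hn : 0 < n := by omega
  have hphi : phi n p = phi n q := hp.trans hq.symm
  have hlt : weight q < 2 * n := by
    unfold weight
    omega
  have hmod : weight p ≡ weight q [MOD n] := weight_modEq_of_phi_eq hn hphi
  rcases eq_or_eq_add_of_modEq_of_lt_two_mul hmod hle hlt with hw | hw
  · exact eq_of_phi_eq_of_snd_eq hn hphi (snd_eq_of_label_eq_of_weight_eq hl hw.symm)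
  · exact absurd hl (label_lt_label_of_weight_eq_add (by omega) hw).ne

theorem ncard_Zfac_le (hs : s < (n - 1) * (3 * n - 2)) : (Zfac n s).ncard ≤ n / 2 := by
  have hmaps : Set.MapsTo (label n) (Zfac n s) (Set.Iio (n / 2)) :=
    fun _ hp ↦ label_lt (add_lt_of_mem_Zfac hs hp)
  calc (Zfac n s).ncard ≤ (Set.Iio (n / 2)).ncard :=
        Set.ncard_le_ncard_of_injOn _ hmaps (injOn_label_Zfac hs)
    _ = n / 2 := Set.ncard_Iio_nat _

end Counting

section Frobenius

variable {n : ℕ}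

lemma mem_Tset_of_add_eq_mul {t r k : ℕ} (hn : 0 < n) (h : t + r = n * k)
    (hk : 3 * ((r + 1) / 2) ≤ k) : t ∈ Tset n := by
  set p : ℕ × ℕ × ℕ := (k - 3 * ((r + 1) / 2), r / 2, r % 2) with hp
  have hweight : weight p = r := Nat.div_add_mod r 2
  have hfst : p.1 + 3 * (p.2.1 + p.2.2) = k := by
    simp only [hp]
    omega
  have hphi : phi n p = t := by
    have := phi_add_weight hn p
    rw [hweight, hfst] at this
    omega
  exact ⟨p.1, p.2.1, p.2.2, hphi.symm⟩

lemma FT_two_mul_add_one (m : ℕ) : FT (2 * m + 1) = (2 * m + 1) * (3 * m - 2) + 2 := by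
  have h : 3 * (2 * m + 1) - 7 = 2 * (3 * m - 2) := by omega
  rw [FT, h, mul_left_comm, Nat.mul_div_cancel_left _ two_pos]

lemma two_mul_FT (hodd : Odd n) (hn : 3 ≤ n) : 2 * FT n = (n - 1) * (3 * n - 4) := by
  obtain ⟨m, rfl⟩ := hodd
  obtain ⟨k, rfl⟩ : ∃ k, m = k + 1 := ⟨m - 1, by omega⟩
  have h₁ : 3 * (k + 1) - 2 = 3 * k + 1 := by omega
  have h₂ : 3 * (2 * (k + 1) + 1) - 4 = 6 * k + 5 := by omega
  rw [FT_two_mul_add_one, h₁, h₂, Nat.add_sub_cancel]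
  ring

lemma mem_Tset_of_FT_lt (hodd : Odd n) {t : ℕ} (ht : FT n < t) : t ∈ Tset n := by
  obtain ⟨r, hr, k, hk⟩ := exists_lt_add_eq_mul hodd.pos t
  refine mem_Tset_of_add_eq_mul hodd.pos hk ?_
  obtain ⟨m, rfl⟩ := hodd
  rw [FT_two_mul_add_one] at ht
  have hlower : 3 * m - 2 < k :=
    lt_of_mul_lt_mul_left (a := 2 * m + 1) (by omega) (Nat.zero_le _)
  -- Only `r = n - 2` and `r = n - 1` need as many as `m` generators of weight `1` or `2`, hence
  -- `k ≥ 3m`; the Frobenius number itself is the case `r = n - 2`, `k = 3m - 1`.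
  rcases lt_or_ge r (2 * m - 1) with hsmall | hlarge
  · omega
  · have hlower' : 3 * m - 2 + 1 < k := by
      refine lt_of_mul_lt_mul_left (a := 2 * m + 1) ?_ (Nat.zero_le _)
      rw [mul_add_one]
      omega
    omega

lemma le_two_mul_FT_of_mem_Ap (hodd : Odd n) {s : ℕ} (hs : s ∈ Ap n) : s ≤ 2 * FT n := by
  by_contra! hlt
  have hmem : s - FT n ∈ Tset n := mem_Tset_of_FT_lt hodd (by omega)
  exact hs.2 ⟨s - FT n, Or.inl hmem, by omega⟩

end Frobenius

/-- For every `i ≥ (n+1)/2`, no element of the Apéry set has exactly `i`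
factorizations: `M_i = ∅`. -/
theorem stmt10 (n : ℕ) (hodd : Odd n) (hn : 5 ≤ n) :
    ∀ i : ℕ, (n + 1) / 2 ≤ i → Mset n i = ∅ := by
  intro i hi
  refine Set.eq_empty_of_forall_notMem ?_
  rintro s ⟨hs, rfl⟩
  have hlt : s < (n - 1) * (3 * n - 2) :=
    calc s ≤ 2 * FT n := le_two_mul_FT_of_mem_Ap hodd hs
      _ = (n - 1) * (3 * n - 4) := two_mul_FT hodd (by omega)
      _ < (n - 1) * (3 * n - 2) := Nat.mul_lt_mul_of_pos_left (by omega) (by omega)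
  have hcard : (Zfac n s).ncard ≤ n / 2 := ncard_Zfac_le hlt
  obtain ⟨m, rfl⟩ := hodd
  omega
end

section
/- Let n be an odd integer with n ≥ 5, T = {an + b(3n−2) + c(3n−1) : a,b,c ∈ ℕ}, F(T) = n(3n−7)/2 + 2, and S = T ∪ {F(T)}. Then the number of distinct L-shapes associated to Ap(S, F(T)) is exactly (n+3)/2. Consequently, for every positive integer N there exists an odd integer n ≥ 5 such that the embedding-dimension-four numerical semigroup S = ⟨n, 3n−2, 3n−1, F(T)⟩ has at least N distinct associated L-shapes; that is, the number of L-shapes of embedding-dimension-four numerical semigroups is not bounded above. -/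
/-!
Write `n = 2m + 1`. Since `phi n (x, y, z) = n(x + 3y + 3z) - (2y + z)`, the factorizations of the
elements of the Apéry set are related by two exchanges only: `(0, 0, 2)` for `(3, 1, 0)`, and
`(0, m + 1 + i, 0)` for `(3m - 1 - 3i, 0, 2i + 1)`. An L-shape `L` is downward closed, so omitting a
triple means omitting everything above it. Hence `L` is pinned down by which side of the first
exchange it omits and by the height `J < m` of the tower of triples `(0, m + 1 + i, 0)` it contains.
If `(3, 1, 0)` is omitted, every `J` occurs. If `(0, 0, 2)` is omitted, then `0 < J` forces
`(3m - 1, 0, 1)` out of `L`, so that each value of a tower triple has to be represented by that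
triple; thus `J` is `0` or `m - 1`. This gives `m + 2 = (n + 3) / 2` L-shapes.
-/

theorem cast_phi {n : ℕ} (hn : 1 ≤ n) (x y z : ℕ) :
    (phi n (x, y, z) : ℤ) = n * (x + 3 * y + 3 * z : ℤ) - (2 * y + z : ℤ) := by
  obtain ⟨k, rfl⟩ := Nat.exists_eq_add_of_le' hn
  have hy : 3 * (k + 1) - 2 = 3 * k + 1 := by omega
  have hz : 3 * (k + 1) - 1 = 3 * k + 2 := by omega
  simp only [phi, hy, hz]
  push_cast
  ring

theorem cast_FT {m : ℕ} (hm : 1 ≤ m) :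
    (FT (2 * m + 1) : ℤ) = (2 * m + 1 : ℕ) * (3 * m - 1 : ℤ) - (2 * m - 1 : ℤ) := by
  obtain ⟨k, rfl⟩ := Nat.exists_eq_add_of_le' hm
  have hsub : 3 * (2 * (k + 1) + 1) - 7 = (3 * k + 1) * 2 := by omega
  simp only [FT, hsub, ← mul_assoc, Nat.mul_div_cancel _ two_pos]
  push_cast
  ring

theorem mul_sub_eq_mul_sub_iff {n h h' w w' : ℤ} (hw : w < w' + n) (hw' : w' < w + n) :
    n * h - w = n * h' - w' ↔ h = h' ∧ w = w' := by
  refine ⟨fun heq => ?_, by rintro ⟨rfl, rfl⟩; rfl⟩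
  have hdiff : w - w' = n * (h - h') := by linarith
  have hzero : w - w' = 0 :=
    Int.eq_zero_of_abs_lt_dvd ⟨_, hdiff⟩ (abs_lt.2 ⟨by linarith, by linarith⟩)
  have hn : n ≠ 0 := by linarith
  have hh : h - h' = 0 := (mul_eq_zero.1 (hdiff.symm.trans hzero)).resolve_left hn
  exact ⟨sub_eq_zero.1 hh, sub_eq_zero.1 hzero⟩

/-- The profile `(x + 3⌊z/2⌋, 2y + z)` of `(x, y, z)`: two triples are related by the relation
`3 • n + (3n - 2) = 2 • (3n - 1)` exactly when they have the same profile. -/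
def profile (p : ℕ × ℕ × ℕ) : ℕ × ℕ := (p.1 + 3 * (p.2.2 / 2), 2 * p.2.1 + p.2.2)

/-- The common value under `phi n` of all triples with profile `c`, computed at the one
with last coordinate less than `2`. -/
def profileValue (n : ℕ) (c : ℕ × ℕ) : ℕ := phi n (c.1, c.2 / 2, c.2 % 2)

theorem cast_profileValue {n : ℕ} (hn : 1 ≤ n) (e w : ℕ) :
    (profileValue n (e, w) : ℤ) = n * (e + 3 * ((w + 1) / 2) : ℤ) - w := by
  have hh : (e + 3 * (w / 2 : ℕ) + 3 * (w % 2 : ℕ) : ℤ) = e + 3 * ((w + 1) / 2) := by omega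
  have hw : (2 * (w / 2 : ℕ) + (w % 2 : ℕ) : ℤ) = w := by omega
  rw [profileValue, cast_phi hn, hh, hw]

theorem profileValue_profile {n : ℕ} (hn : 1 ≤ n) (p : ℕ × ℕ × ℕ) :
    profileValue n (profile p) = phi n p := by
  obtain ⟨x, y, z⟩ := p
  have hh : ((x + 3 * (z / 2) : ℕ) + 3 * (((2 * y + z : ℕ) + 1) / 2) : ℤ) = x + 3 * y + 3 * z := by
    omega
  zify
  rw [profile, cast_profileValue hn, cast_phi hn, hh]
  push_cast
  rfl

theorem mem_Tset_iff_exists_profileValue {n : ℕ} (hn : 1 ≤ n) {s : ℕ} :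
    s ∈ Tset n ↔ ∃ c, profileValue n c = s := by
  refine ⟨?_, fun ⟨c, hc⟩ => ⟨c.1, c.2 / 2, c.2 % 2, hc.symm⟩⟩
  rintro ⟨x, y, z, rfl⟩
  exact ⟨profile (x, y, z), profileValue_profile hn (x, y, z)⟩

theorem exists_mem_Tset_eq {n w : ℕ} (hn : 1 ≤ n) {h : ℤ} (hw : 3 * ((w + 1) / 2 : ℤ) ≤ h) :
    ∃ t ∈ Tset n, (t : ℤ) = n * h - w := by
  obtain ⟨e, he⟩ := Int.eq_ofNat_of_zero_le (sub_nonneg.2 hw)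
  refine ⟨_, (mem_Tset_iff_exists_profileValue hn).2 ⟨(e, w), rfl⟩, ?_⟩
  rw [cast_profileValue hn, ← he, sub_add_cancel]

theorem exists_mem_Tset_eq_iff {n w : ℕ} (hn : 2 ≤ n) (hwn : w < n) {h : ℤ} :
    (∃ t ∈ Tset n, (t : ℤ) = n * h - w) ↔ 3 * ((w + 1) / 2 : ℤ) ≤ h := by
  have hn1 : 1 ≤ n := one_le_two.trans hn
  refine ⟨?_, exists_mem_Tset_eq hn1⟩
  rintro ⟨t, ht, hval⟩
  obtain ⟨⟨e, v⟩, rfl⟩ := (mem_Tset_iff_exists_profileValue hn1).1 ht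
  rw [cast_profileValue hn1] at hval
  obtain ⟨d, hd⟩ : ∃ d : ℤ, d = e + 3 * ((v + 1) / 2) - h := ⟨_, rfl⟩
  have hv : (v : ℤ) = w + n * d := by rw [hd]; linarith
  have hd0 : 0 ≤ d := by
    have : (n : ℤ) * (-1) < n * d := by omega
    have := lt_of_mul_lt_mul_left this n.cast_nonneg
    omega
  have hnd : 2 * d ≤ n * d := mul_le_mul_of_nonneg_right (by exact_mod_cast hn) hd0
  omega

/-- The profiles of the factorizations of the elements of `Ap(S, F(T))`, where `n = 2m + 1`. -/
def aperyProfiles (m : ℕ) : Set (ℕ × ℕ) :=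
  {c | (c.2 + 2 ≤ 2 * m ∧ c.1 ≤ 3 * m ∧ ¬ (c.2 + 3 = 2 * m ∧ c.1 = 3 * m)) ∨
    (c.2 % 2 = 0 ∧ 2 * m ≤ c.2 ∧ c.1 ≤ 1 ∧ 2 * c.1 + c.2 + 2 ≤ 4 * m)}

theorem mem_aperyProfiles {m e w : ℕ} : (e, w) ∈ aperyProfiles m ↔
    (w + 2 ≤ 2 * m ∧ e ≤ 3 * m ∧ ¬ (w + 3 = 2 * m ∧ e = 3 * m)) ∨
      (w % 2 = 0 ∧ 2 * m ≤ w ∧ e ≤ 1 ∧ 2 * e + w + 2 ≤ 4 * m) := Iff.rfl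

theorem exists_mem_Tset_add_FT_iff {m : ℕ} (hm : 1 ≤ m) (e w : ℕ) :
    (∃ t ∈ Tset (2 * m + 1), t + FT (2 * m + 1) = profileValue (2 * m + 1) (e, w)) ↔
      (w + 2 ≤ 2 * m ∧ 3 * m < e) ∨ (2 * m ≤ w + 1 ∧ (w % 2 = 1 ∨ 2 ≤ e ∨ 4 * m ≤ w)) := by
  -- `value - F(T) = n * h - v` for every `d`; the three ranges of `w` need `d = 1, 0, -1`.
  have hshift (d h : ℤ) (v : ℕ) (hh : h = e + 3 * ((w + 1) / 2) - 3 * m + 1 + d)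
      (hv : (v : ℤ) = w - 2 * m + 1 + (2 * m + 1 : ℕ) * d) (t : ℕ) :
      t + FT (2 * m + 1) = profileValue (2 * m + 1) (e, w) ↔
        (t : ℤ) = (2 * m + 1 : ℕ) * h - v := by
    zify
    rw [cast_FT hm, cast_profileValue (by omega), hh, hv]
    constructor <;> intro ht <;> push_cast at ht ⊢ <;> linarith
  rcases lt_or_ge (w + 1) (2 * m) with hlow | hlow
  · simp only [hshift 1 _ (w + 2) rfl (by push_cast; ring)]
    rw [exists_mem_Tset_eq_iff (by omega) (by omega)]
    omega
  rcases lt_or_ge w (4 * m) with hmid | hhigh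
  · simp only [hshift 0 _ (w + 1 - 2 * m) rfl (by omega)]
    rw [exists_mem_Tset_eq_iff (by omega) (by omega)]
    omega
  · simp only [hshift (-1) _ (w - 4 * m) rfl (by omega)]
    exact iff_of_true (exists_mem_Tset_eq (by omega) (by omega)) (by omega)

theorem FT_add_FT_eq_iff {m e w : ℕ} (hw : w < 4 * m) :
    FT (2 * m + 1) + FT (2 * m + 1) = profileValue (2 * m + 1) (e, w) ↔
      (w + 3 = 2 * m ∧ e = 3 * m) ∨ (w + 2 = 4 * m ∧ e = 1) := by
  have hdouble (d : ℤ) : (FT (2 * m + 1) + FT (2 * m + 1) : ℤ) =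
      (2 * m + 1 : ℕ) * (6 * m - 2 + d) - (4 * m - 2 + (2 * m + 1 : ℕ) * d) := by
    rw [cast_FT (by omega)]
    ring
  zify
  rw [cast_profileValue (by omega)]
  rcases lt_or_ge (w + 1) (2 * m) with hlow | hlow
  · rw [hdouble (-1), mul_sub_eq_mul_sub_iff (by omega) (by omega)]
    omega
  · rw [hdouble 0, mul_sub_eq_mul_sub_iff (by omega) (by omega)]
    omega

theorem Ap_subset_Tset (n : ℕ) : Ap n ⊆ Tset n := by
  rintro s ⟨hs | rfl, hsub⟩
  · exact hs
  · exact absurd ⟨0, Or.inl ⟨0, 0, 0, by simp⟩, zero_add _⟩ hsub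

theorem mem_Ap_iff_of_mem_Tset {n s : ℕ} (hs : s ∈ Tset n) :
    s ∈ Ap n ↔ ¬ (∃ t ∈ Tset n, t + FT n = s) ∧ FT n + FT n ≠ s := by
  have hsS : s ∈ Sset n := Or.inl hs
  simp only [Ap, Set.mem_ofPred_eq, hsS, true_and]
  simp only [Sset, Set.mem_union, Set.mem_singleton_iff, or_and_right, exists_or, exists_eq_left,
    not_or, ne_eq]

theorem profileValue_mem_Ap_iff {m : ℕ} (hm : 1 ≤ m) {c : ℕ × ℕ} :
    profileValue (2 * m + 1) c ∈ Ap (2 * m + 1) ↔ c ∈ aperyProfiles m := by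
  obtain ⟨e, w⟩ := c
  rw [mem_Ap_iff_of_mem_Tset ((mem_Tset_iff_exists_profileValue (by omega)).2 ⟨_, rfl⟩),
    exists_mem_Tset_add_FT_iff hm, mem_aperyProfiles]
  rcases lt_or_ge w (4 * m) with hw | hw
  · rw [ne_eq, FT_add_FT_eq_iff hw]
    omega
  · omega

theorem phi_mem_Ap_iff {m : ℕ} (hm : 1 ≤ m) {p : ℕ × ℕ × ℕ} :
    phi (2 * m + 1) p ∈ Ap (2 * m + 1) ↔ profile p ∈ aperyProfiles m := by
  rw [← profileValue_profile (by omega), profileValue_mem_Ap_iff hm]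

theorem profile_mem_aperyProfiles_of_le {m : ℕ} {p q : ℕ × ℕ × ℕ} (hqp : q ≤ p)
    (hp : profile p ∈ aperyProfiles m) : profile q ∈ aperyProfiles m := by
  obtain ⟨x, y, z⟩ := p
  obtain ⟨u, v, w⟩ := q
  simp only [Prod.mk_le_mk] at hqp
  simp only [profile, mem_aperyProfiles] at hp ⊢
  omega

theorem profileValue_odd_eq_even {m : ℕ} (hm : 1 ≤ m) (e i : ℕ) :
    profileValue (2 * m + 1) (e + (3 * m - 1), 2 * i + 1) =
      profileValue (2 * m + 1) (e, 2 * (m + 1 + i)) := by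
  obtain ⟨k, rfl⟩ := Nat.exists_eq_add_of_le' hm
  have hodd : (((2 * i + 1 : ℕ) + 1) / 2 : ℤ) = i + 1 := by omega
  have heven : (((2 * (k + 1 + 1 + i) : ℕ) + 1) / 2 : ℤ) = k + 2 + i := by omega
  have hsub : 3 * (k + 1) - 1 = 3 * k + 2 := by omega
  zify
  rw [cast_profileValue (by omega), cast_profileValue (by omega), hodd, heven, hsub]
  push_cast
  ring

theorem eq_or_even_odd_of_profileValue_eq {m : ℕ} {e w e' w' : ℕ} (hc : (e, w) ∈ aperyProfiles m)
    (hc' : (e', w') ∈ aperyProfiles m) (hle : w' ≤ w)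
    (heq : profileValue (2 * m + 1) (e, w) = profileValue (2 * m + 1) (e', w')) :
    (e, w) = (e', w') ∨ ∃ i, w = 2 * (m + 1 + i) ∧ w' = 2 * i + 1 ∧ e' = e + (3 * m - 1) := by
  zify at heq
  rw [cast_profileValue (by omega), cast_profileValue (by omega)] at heq
  rw [mem_aperyProfiles] at hc hc'
  rcases lt_or_ge w (w' + (2 * m + 1)) with hlt | hge
  · rw [mul_sub_eq_mul_sub_iff (by omega) (by omega)] at heq
    left
    ext <;> dsimp only <;> omega
  · have hshift : ((2 * m + 1 : ℕ) * (e + 3 * ((w + 1) / 2)) - w : ℤ) =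
        (2 * m + 1 : ℕ) * (e + 3 * ((w + 1) / 2) - 1) - (w - (2 * m + 1 : ℕ)) := by ring
    rw [hshift, mul_sub_eq_mul_sub_iff (by omega) (by omega)] at heq
    exact Or.inr ⟨w' / 2, by omega, by omega, by omega⟩

/-- The transversal of `aperyProfiles m` for equality of values in which the doubly represented
values with profiles `(e, 2(m + 1 + i))` and `(e + 3m - 1, 2i + 1)` are represented by the former
if `i < J` and by the latter otherwise. -/
def transversal (m J : ℕ) : Set (ℕ × ℕ) :=
  {c ∈ aperyProfiles m | c.2 ≤ 2 * (m + J) ∧ ¬ (c.2 % 2 = 1 ∧ c.2 < 2 * J ∧ 3 * m - 1 ≤ c.1)}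

theorem mem_transversal {m J e w : ℕ} : (e, w) ∈ transversal m J ↔
    (e, w) ∈ aperyProfiles m ∧ w ≤ 2 * (m + J) ∧
      ¬ (w % 2 = 1 ∧ w < 2 * J ∧ 3 * m - 1 ≤ e) := Iff.rfl

theorem injOn_profileValue_transversal (m J : ℕ) :
    Set.InjOn (profileValue (2 * m + 1)) (transversal m J) := by
  have eq_of_le {e w e' w' : ℕ} (hc : (e, w) ∈ transversal m J) (hc' : (e', w') ∈ transversal m J)
      (hle : w' ≤ w)
      (heq : profileValue (2 * m + 1) (e, w) = profileValue (2 * m + 1) (e', w')) :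
      (e, w) = (e', w') := by
    refine (eq_or_even_odd_of_profileValue_eq hc.1 hc'.1 hle heq).resolve_right ?_
    rintro ⟨i, rfl, rfl, rfl⟩
    have := hc.2.1
    exact hc'.2.2 ⟨by omega, by dsimp only at *; omega, Nat.le_add_left _ _⟩
  rintro ⟨e, w⟩ hc ⟨e', w'⟩ hc' heq
  rcases le_total w' w with hle | hle
  · exact eq_of_le hc hc' hle heq
  · exact (eq_of_le hc' hc hle heq.symm).symm

theorem exists_mem_transversal {m : ℕ} (J : ℕ) {c : ℕ × ℕ} (hc : c ∈ aperyProfiles m) :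
    ∃ d ∈ transversal m J, profileValue (2 * m + 1) d = profileValue (2 * m + 1) c := by
  obtain ⟨e, w⟩ := c
  have hm : 1 ≤ m := by
    rw [mem_aperyProfiles] at hc
    omega
  by_cases hhigh : 2 * (m + J) < w
  · obtain ⟨i, rfl⟩ : ∃ i, w = 2 * (m + 1 + i) := by
      rw [mem_aperyProfiles] at hc
      exact ⟨w / 2 - (m + 1), by omega⟩
    refine ⟨_, ?_, profileValue_odd_eq_even hm e i⟩
    rw [mem_aperyProfiles] at hc
    rw [mem_transversal, mem_aperyProfiles]
    omega
  by_cases hflip : w % 2 = 1 ∧ w < 2 * J ∧ 3 * m - 1 ≤ e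
  · obtain ⟨hodd, hlt, hle⟩ := hflip
    obtain ⟨d, rfl⟩ := Nat.exists_eq_add_of_le' hle
    obtain ⟨i, rfl⟩ := Nat.odd_iff.2 hodd
    refine ⟨_, ?_, (profileValue_odd_eq_even hm d i).symm⟩
    rw [mem_aperyProfiles] at hc
    rw [mem_transversal, mem_aperyProfiles]
    omega
  · exact ⟨_, ⟨hc, not_lt.1 hhigh, hflip⟩, rfl⟩

theorem bijOn_profileValue_transversal {m : ℕ} (hm : 1 ≤ m) (J : ℕ) :
    Set.BijOn (profileValue (2 * m + 1)) (transversal m J) (Ap (2 * m + 1)) := by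
  refine ⟨fun c hc => (profileValue_mem_Ap_iff hm).2 hc.1, injOn_profileValue_transversal m J, ?_⟩
  intro s hs
  obtain ⟨c, rfl⟩ := (mem_Tset_iff_exists_profileValue (by omega)).1 (Ap_subset_Tset _ hs)
  exact exists_mem_transversal J ((profileValue_mem_Ap_iff hm).1 hs)

theorem exists_not_le_and_profile_eq {g : ℕ × ℕ × ℕ} (hg : g = (0, 0, 2) ∨ g = (3, 1, 0))
    (c : ℕ × ℕ) : ∃ p, ¬ g ≤ p ∧ profile p = c := by
  obtain ⟨e, w⟩ := c
  rcases hg with rfl | rfl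
  · refine ⟨(e, w / 2, w % 2), ?_, ?_⟩
    · simp only [Prod.mk_le_mk]
      omega
    · ext <;> simp only [profile] <;> omega
  · obtain ⟨k, hkw, hke, hk⟩ : ∃ k, k ≤ w / 2 ∧ 3 * k ≤ e ∧ (k = w / 2 ∨ e ≤ 3 * k + 2) :=
      ⟨min (w / 2) (e / 3), by omega, by omega, by omega⟩
    refine ⟨(e - 3 * k, w / 2 - k, w % 2 + 2 * k), ?_, ?_⟩
    · simp only [Prod.mk_le_mk]
      omega
    · ext <;> simp only [profile] <;> omega

theorem injOn_profile {g : ℕ × ℕ × ℕ} (hg : g = (0, 0, 2) ∨ g = (3, 1, 0)) :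
    Set.InjOn profile {p | ¬ g ≤ p} := by
  rintro ⟨x, y, z⟩ hp ⟨u, v, w⟩ hq heq
  simp only [profile, Prod.mk.injEq] at heq ⊢
  rcases hg with rfl | rfl <;> simp only [Set.mem_ofPred_eq, Prod.mk_le_mk] at hp hq <;> omega

theorem bijOn_profile {g : ℕ × ℕ × ℕ} (hg : g = (0, 0, 2) ∨ g = (3, 1, 0)) (D : Set (ℕ × ℕ)) :
    Set.BijOn profile {p | ¬ g ≤ p ∧ profile p ∈ D} D := by
  refine ⟨fun p hp => hp.2, (injOn_profile hg).mono fun p hp => hp.1, fun c hc => ?_⟩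
  obtain ⟨p, hp, rfl⟩ := exists_not_le_and_profile_eq hg c
  exact ⟨p, ⟨hp, hc⟩, rfl⟩

/-- The candidate L-shapes for `n = 2m + 1`. Here `g` is the omitted one of `(0, 0, 2)` and
`(3, 1, 0)`, which have equal values, and `J` is the number of triples `(0, m + 1 + i, 0)` that are
kept; for `i < J` this excludes `(3m - 1 - 3i, 0, 2i + 1)`, which has the same value. -/
def shape (m : ℕ) (g : ℕ × ℕ × ℕ) (J : ℕ) : Set (ℕ × ℕ × ℕ) :=
  {p | phi (2 * m + 1) p ∈ Ap (2 * m + 1) ∧ ¬ g ≤ p ∧ ¬ (0, m + 1 + J, 0) ≤ p ∧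
    ∀ i < J, ¬ (3 * m - 1 - 3 * i, 0, 2 * i + 1) ≤ p}

/-- The pairs `g, J` that occur as parameters of an L-shape `shape m g J`. -/
def IsAdmissible (m : ℕ) (g : ℕ × ℕ × ℕ) (J : ℕ) : Prop :=
  (g = (0, 0, 2) ∧ (J = 0 ∨ J + 1 = m)) ∨ (g = (3, 1, 0) ∧ J < m)

theorem IsAdmissible.forall_not_le_iff {m J : ℕ} {g p : ℕ × ℕ × ℕ} (h : IsAdmissible m g J)
    (hg : ¬ g ≤ p) (hp : profile p ∈ aperyProfiles m) :
    (∀ i < J, ¬ (3 * m - 1 - 3 * i, 0, 2 * i + 1) ≤ p) ↔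
      ¬ ((profile p).2 % 2 = 1 ∧ (profile p).2 < 2 * J ∧ 3 * m - 1 ≤ (profile p).1) := by
  obtain ⟨x, y, z⟩ := p
  simp only [profile, mem_aperyProfiles] at hp ⊢
  constructor
  · rintro hforall ⟨hodd, hlt, hle⟩
    have := hforall (z / 2) (by omega)
    rcases h with ⟨rfl, hJ⟩ | ⟨rfl, hJ⟩ <;> simp only [Prod.mk_le_mk] at hg this <;> omega
  · intro hflip i hi hle
    rcases h with ⟨rfl, hJ⟩ | ⟨rfl, hJ⟩ <;> simp only [Prod.mk_le_mk] at hg hle <;> omega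

theorem IsAdmissible.shape_eq {m J : ℕ} {g : ℕ × ℕ × ℕ} (hm : 1 ≤ m) (h : IsAdmissible m g J) :
    shape m g J = {p | ¬ g ≤ p ∧ profile p ∈ transversal m J} := by
  ext p
  have htower (hp : profile p ∈ aperyProfiles m) :
      ¬ (0, m + 1 + J, 0) ≤ p ↔ (profile p).2 ≤ 2 * (m + J) := by
    obtain ⟨x, y, z⟩ := p
    simp only [profile, mem_aperyProfiles, Prod.mk_le_mk] at hp ⊢
    omega
  simp only [shape, transversal, Set.mem_ofPred_eq, phi_mem_Ap_iff hm]
  constructor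
  · rintro ⟨hp, hg, hhigh, hforall⟩
    exact ⟨hg, hp, (htower hp).1 hhigh, (h.forall_not_le_iff hg hp).1 hforall⟩
  · rintro ⟨hg, hp, hhigh, hflip⟩
    exact ⟨hp, hg, (htower hp).2 hhigh, (h.forall_not_le_iff hg hp).2 hflip⟩

theorem IsAdmissible.isLShape_shape {m J : ℕ} {g : ℕ × ℕ × ℕ} (hm : 1 ≤ m)
    (h : IsAdmissible m g J) : IsLShape (2 * m + 1) (shape m g J) := by
  constructor
  · have hphi : phi (2 * m + 1) = profileValue (2 * m + 1) ∘ profile :=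
      funext fun p => (profileValue_profile (by omega) p).symm
    rw [hphi, h.shape_eq hm]
    exact (bijOn_profileValue_transversal hm J).comp
      (bijOn_profile (h.imp And.left And.left) _)
  · rintro p ⟨hp, hg, hhigh, hforall⟩ q hqp
    rw [phi_mem_Ap_iff hm] at hp
    exact ⟨(phi_mem_Ap_iff hm).2 (profile_mem_aperyProfiles_of_le hqp hp),
      fun hle => hg (hle.trans hqp), fun hle => hhigh (hle.trans hqp),
      fun i hi hle => hforall i hi (hle.trans hqp)⟩

theorem IsLShape.eq_of_subset {n : ℕ} {L L' : Set (ℕ × ℕ × ℕ)} (hL : IsLShape n L)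
    (hL' : IsLShape n L') (hsub : L ⊆ L') : L = L' :=
  (hL'.1.injOn.image_eq_image_iff hsub subset_rfl).1 (hL.1.image_eq.trans hL'.1.image_eq.symm)

theorem IsLShape.not_le_of_notMem {n : ℕ} {L : Set (ℕ × ℕ × ℕ)} (hL : IsLShape n L)
    {g p : ℕ × ℕ × ℕ} (hg : g ∉ L) (hp : p ∈ L) : ¬ g ≤ p :=
  fun hle => hg (hL.2 p hp g hle)

theorem IsLShape.notMem_or_notMem {n : ℕ} {L : Set (ℕ × ℕ × ℕ)} (hn : 1 ≤ n)
    (hL : IsLShape n L) : (0, 0, 2) ∉ L ∨ (3, 1, 0) ∉ L := by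
  by_contra! h
  have heq : phi n (0, 0, 2) = phi n (3, 1, 0) := by simp only [phi]; omega
  simpa using hL.1.injOn h.1 h.2 heq

theorem phi_eq_phi_tower {m i : ℕ} (hi : i < m) :
    phi (2 * m + 1) (3 * m - 1 - 3 * i, 0, 2 * i + 1) = phi (2 * m + 1) (0, m + 1 + i, 0) := by
  rw [← profileValue_profile (by omega), ← profileValue_profile (by omega)]
  convert profileValue_odd_eq_even (m := m) (by omega) 0 i using 2 <;>
    simp only [profile] <;> ext <;> dsimp only <;> omega

theorem IsLShape.exists_tower_height {m : ℕ} (hm : 1 ≤ m) {L : Set (ℕ × ℕ × ℕ)}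
    (hL : IsLShape (2 * m + 1) L) :
    ∃ J < m, (0, m + 1 + J, 0) ∉ L ∧ ∀ i < J, (0, m + 1 + i, 0) ∈ L := by
  classical
  have htop : (0, m + 1 + (m - 1), 0) ∉ L := fun hmem => by
    have := (phi_mem_Ap_iff hm).1 (hL.1.mapsTo hmem)
    simp only [profile, mem_aperyProfiles] at this
    omega
  have hex : ∃ j, (0, m + 1 + j, 0) ∉ L := ⟨_, htop⟩
  refine ⟨Nat.find hex, ?_, Nat.find_spec hex, fun i hi => not_not.1 (Nat.find_min hex hi)⟩
  have := Nat.find_min' hex htop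
  omega

theorem IsLShape.subset_shape {m J : ℕ} {L : Set (ℕ × ℕ × ℕ)} {g : ℕ × ℕ × ℕ}
    (hL : IsLShape (2 * m + 1) L) (hg : g ∉ L) (hJm : J < m) (hJ : (0, m + 1 + J, 0) ∉ L)
    (hlt : ∀ i < J, (0, m + 1 + i, 0) ∈ L) : L ⊆ shape m g J := by
  intro p hp
  refine ⟨hL.1.mapsTo hp, hL.not_le_of_notMem hg hp, hL.not_le_of_notMem hJ hp, fun i hi => ?_⟩
  refine hL.not_le_of_notMem (fun hmem => ?_) hp
  simpa using hL.1.injOn hmem (hlt i hi) (phi_eq_phi_tower (hi.trans hJm))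

theorem IsLShape.tower_height_eq_zero_or_eq {m J : ℕ} {L : Set (ℕ × ℕ × ℕ)}
    (hL : IsLShape (2 * m + 1) L) (hsub : L ⊆ shape m (0, 0, 2) J) (hJm : J < m) :
    J = 0 ∨ J + 1 = m := by
  by_contra! hJ
  have hm : 1 ≤ m := by omega
  have hap : (0, 2 * (m + 1 + J)) ∈ aperyProfiles m := by
    rw [mem_aperyProfiles]
    omega
  obtain ⟨q, hq, heq⟩ := hL.1.surjOn ((profileValue_mem_Ap_iff hm).2 hap)
  obtain ⟨hqap, hz, hhigh, hforall⟩ := hsub hq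
  have hx := hforall 0 (by omega)
  rw [phi_mem_Ap_iff hm] at hqap
  rw [← profileValue_profile (by omega)] at heq
  obtain ⟨x, y, z⟩ := q
  simp only [profile, Prod.mk_le_mk] at hqap hz hhigh hx heq
  have hle : 2 * y + z ≤ 2 * (m + 1 + J) := by
    rw [mem_aperyProfiles] at hqap
    omega
  rcases eq_or_even_odd_of_profileValue_eq hap hqap hle heq.symm with hsame | ⟨i, hflip⟩
  · rw [Prod.mk.injEq] at hsame
    omega
  · omega

theorem IsLShape.exists_eq_shape {m : ℕ} (hm : 1 ≤ m) {L : Set (ℕ × ℕ × ℕ)}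
    (hL : IsLShape (2 * m + 1) L) : ∃ g J, IsAdmissible m g J ∧ L = shape m g J := by
  obtain ⟨J, hJm, hJ, hlt⟩ := hL.exists_tower_height hm
  obtain ⟨g, hadm, hsub⟩ : ∃ g, IsAdmissible m g J ∧ L ⊆ shape m g J := by
    rcases hL.notMem_or_notMem (by omega) with hg | hg
    · have hsub := hL.subset_shape hg hJm hJ hlt
      exact ⟨_, Or.inl ⟨rfl, hL.tower_height_eq_zero_or_eq hsub hJm⟩, hsub⟩
    · exact ⟨_, Or.inr ⟨rfl, hJm⟩, hL.subset_shape hg hJm hJ hlt⟩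
  exact ⟨g, J, hadm, hL.eq_of_subset (hadm.isLShape_shape hm) hsub⟩

theorem setOf_isLShape_eq {m : ℕ} (hm : 1 ≤ m) :
    {L | IsLShape (2 * m + 1) L} =
      shape m (0, 0, 2) '' {0, m - 1} ∪ shape m (3, 1, 0) '' Set.Iio m := by
  ext L
  constructor
  · intro hL
    obtain ⟨g, J, ⟨rfl, hJ⟩ | ⟨rfl, hJ⟩, rfl⟩ := IsLShape.exists_eq_shape hm hL
    · exact Or.inl ⟨J, hJ.imp_right fun hJm => by rw [← hJm]; rfl, rfl⟩
    · exact Or.inr ⟨J, hJ, rfl⟩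
  · rintro (⟨J, hJ, rfl⟩ | ⟨J, hJ, rfl⟩)
    · have hJ' : J = 0 ∨ J + 1 = m := hJ.imp_right fun (h : J = m - 1) => by omega
      exact IsAdmissible.isLShape_shape hm (Or.inl ⟨rfl, hJ'⟩)
    · exact IsAdmissible.isLShape_shape hm (Or.inr ⟨rfl, hJ⟩)

theorem tower_mem_shape {m j J : ℕ} {g : ℕ × ℕ × ℕ} (hg : g = (0, 0, 2) ∨ g = (3, 1, 0))
    (hj : j + 1 < m) (hjJ : j < J) : (0, m + 1 + j, 0) ∈ shape m g J := by
  refine ⟨?_, ?_, ?_, fun i _ => ?_⟩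
  · rw [phi_mem_Ap_iff (by omega), profile, mem_aperyProfiles]
    dsimp only
    omega
  · rcases hg with rfl | rfl <;> simp
  · simpa using hjJ
  · simp

theorem injOn_shape {m : ℕ} {g : ℕ × ℕ × ℕ} (hg : g = (0, 0, 2) ∨ g = (3, 1, 0)) :
    Set.InjOn (shape m g) (Set.Iio m) := by
  have ne_of_lt {J K : ℕ} (hK : K < m) (hJK : J < K) : shape m g J ≠ shape m g K := fun heq => by
    have hmem : (0, m + 1 + J, 0) ∈ shape m g J := heq ▸ tower_mem_shape hg (by omega) hJK
    exact hmem.2.2.1 le_rfl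
  intro J hJ K hK heq
  rcases lt_trichotomy J K with hlt | rfl | hgt
  · exact absurd heq (ne_of_lt hK hlt)
  · rfl
  · exact absurd heq.symm (ne_of_lt hJ hgt)

theorem shape_ne_shape {m J : ℕ} (hm : 2 ≤ m) (J' : ℕ) :
    shape m (0, 0, 2) J ≠ shape m (3, 1, 0) J' := fun heq => by
  have hmem : (0, 0, 2) ∈ shape m (3, 1, 0) J' := by
    refine ⟨?_, by simp, by simp, fun i _ => ?_⟩
    · rw [phi_mem_Ap_iff (by omega), profile, mem_aperyProfiles]
      dsimp only
      omega
    · simp only [Prod.mk_le_mk]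
      omega
  rw [← heq] at hmem
  exact hmem.2.1 le_rfl

theorem ncard_setOf_isLShape {m : ℕ} (hm : 2 ≤ m) :
    {L | IsLShape (2 * m + 1) L}.ncard = m + 2 := by
  have hsub : ({0, m - 1} : Set ℕ) ⊆ Set.Iio m := by
    rintro J (rfl | rfl) <;> simp only [Set.mem_Iio] <;> omega
  have hdisj : Disjoint (shape m (0, 0, 2) '' {0, m - 1}) (shape m (3, 1, 0) '' Set.Iio m) := by
    rw [Set.disjoint_left]
    rintro _ ⟨J, -, rfl⟩ ⟨J', -, heq⟩
    exact shape_ne_shape hm J' heq.symm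
  rw [setOf_isLShape_eq (by omega),
    Set.ncard_union_eq hdisj ((Set.toFinite _).image _) ((Set.finite_Iio m).image _),
    ((injOn_shape (.inl rfl)).mono hsub).ncard_image,
    (injOn_shape (.inr rfl)).ncard_image, Set.ncard_pair (by omega), Set.ncard_Iio_nat]
  omega

/-- For every odd `n ≥ 5`, the number of L-shapes associated to `Ap(S, F(T))` is
exactly `(n+3)/2`; consequently the number of L-shapes of embedding-dimension-four
numerical semigroups is not bounded above. -/
theorem stmt19 :
    (∀ n : ℕ, Odd n → 5 ≤ n →
      {L : Set (ℕ × ℕ × ℕ) | IsLShape n L}.ncard = (n + 3) / 2) ∧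
    ∀ N : ℕ, ∃ n : ℕ, Odd n ∧ 5 ≤ n ∧
      N ≤ {L : Set (ℕ × ℕ × ℕ) | IsLShape n L}.ncard := by
  have hcount : ∀ n : ℕ, Odd n → 5 ≤ n →
      {L : Set (ℕ × ℕ × ℕ) | IsLShape n L}.ncard = (n + 3) / 2 := by
    rintro n ⟨m, rfl⟩ hn
    rw [ncard_setOf_isLShape (by omega)]
    omega
  refine ⟨hcount, fun N => ⟨2 * (N + 2) + 1, odd_two_mul_add_one _, by omega, ?_⟩⟩
  rw [hcount _ (odd_two_mul_add_one _) (by omega)]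
  omega
end
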